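/- arXiv:2209.10400 — 7 statements merged into one kernel-verified Lean document; each statement's English description precedes it below -/
import Mathlib

section
/- Let T be a finite tree rooted at r and let p ≥ 2·h(T). In every optimal solution 𝓘 of the Min-Distance problem (a feasible covering minimizing the total cost Σ_{I∈𝓘} C(I)), every leaf of every immersion I ∈ 𝓘 is a leaf of T. -/
/-!
The proof is an exchange argument. Let `v` be a leaf of an immersion `I` in an optimal covering,
with unique `I`-neighbour `u`, and suppose `v` is not a leaf of `T`. Then `v` has a `T`-neighbour
`w ≠ u`. A connected subgraph of a tree contains every path joining two of its vertices
(`toSubgraph_le_of_isPath`), so `w ∉ I` (otherwise the edge `vw` would lie in `I`), and the path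
from `r` to `v` inside `I`, extended by `w`, is the path of `T` from `r` to `w`. The immersion `J`
that covers `w` contains this path, so `J ≠ I` also covers `v`. Deleting `v` from `I` leaves an
immersion (`connected_deleteVerts_of_leaf`) with fewer edges (`immCost_deleteVerts_lt`), and the
modified covering is still feasible, contradicting optimality.
-/

open SimpleGraph Finset

/-- Cost of a subgraph-immersion: twice the number of its edges. -/
noncomputable def immCost {V : Type*} {G : SimpleGraph V} (I : G.Subgraph) : ℕ :=
  2 * I.edgeSet.ncard

/-- An immersion is a connected subgraph of `G` containing the root `r`. -/
def IsImmersion {V : Type*} {G : SimpleGraph V} (r : V) (I : G.Subgraph) : Prop :=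
  I.Connected ∧ r ∈ I.verts

/-- Height of the rooted tree: maximum distance from the root. -/
noncomputable def treeHeight {V : Type*} [Fintype V] (G : SimpleGraph V) (r : V) : ℕ :=
  Finset.univ.sup (fun v => G.dist r v)

/-- A leaf of the rooted tree: a vertex `v ≠ r` of degree 1. -/
def IsTreeLeaf {V : Type*} (G : SimpleGraph V) (r v : V) : Prop :=
  v ≠ r ∧ (G.neighborSet v).ncard = 1

/-- A leaf of an immersion `I`: a vertex `v ≠ r` of degree 1 in `I`. -/
def IsImmLeaf {V : Type*} {G : SimpleGraph V} (r : V) (I : G.Subgraph) (v : V) : Prop :=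
  v ≠ r ∧ (I.neighborSet v).ncard = 1

/-- A feasible covering: a finite set of immersions, each of cost at most `p`,
whose vertex sets cover all vertices. -/
def IsFeasible {V : Type*} [Fintype V] {G : SimpleGraph V} (r : V) (p : ℕ)
    (𝓘 : Finset G.Subgraph) : Prop :=
  (∀ I ∈ 𝓘, IsImmersion r I ∧ immCost I ≤ p) ∧ (∀ v : V, ∃ I ∈ 𝓘, v ∈ I.verts)

/-- Total cost of a set of immersions. -/
noncomputable def totalCost {V : Type*} {G : SimpleGraph V} (𝓘 : Finset G.Subgraph) : ℕ :=
  ∑ I ∈ 𝓘, immCost I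

/-- Optimality for the Min-Distance problem. -/
def MinDistOptimal {V : Type*} [Fintype V] {G : SimpleGraph V} (r : V) (p : ℕ)
    (𝓘 : Finset G.Subgraph) : Prop :=
  IsFeasible r p 𝓘 ∧ ∀ 𝓙 : Finset G.Subgraph, IsFeasible r p 𝓙 → totalCost 𝓘 ≤ totalCost 𝓙

/-- Makespan (maximum collective time) of an assignment `a` of immersions to `k` robots. -/
noncomputable def makespan {V : Type*} {G : SimpleGraph V} (k : ℕ)
    (𝓘 : Finset G.Subgraph) (a : G.Subgraph → Fin k) : ℕ :=
  Finset.univ.sup (fun i : Fin k => ∑ I ∈ 𝓘.filter (fun I => a I = i), immCost I)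

/-- Optimality for the Min-Time problem with `k` robots. -/
def MinTimeOptimal {V : Type*} [Fintype V] {G : SimpleGraph V} (r : V) (p k : ℕ)
    (𝓘 : Finset G.Subgraph) (a : G.Subgraph → Fin k) : Prop :=
  IsFeasible r p 𝓘 ∧ ∀ (𝓙 : Finset G.Subgraph) (b : G.Subgraph → Fin k),
    IsFeasible r p 𝓙 → makespan k 𝓘 a ≤ makespan k 𝓙 b

/-- Optimality for the Min-Immersions problem. -/
def MinImmOptimal {V : Type*} [Fintype V] {G : SimpleGraph V} (r : V) (p : ℕ)
    (𝓘 : Finset G.Subgraph) : Prop :=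
  IsFeasible r p 𝓘 ∧ ∀ 𝓙 : Finset G.Subgraph, IsFeasible r p 𝓙 → 𝓘.card ≤ 𝓙.card

/-- A connected subgraph of an acyclic graph is convex: it contains every path of the ambient graph
between two of its vertices. -/
lemma toSubgraph_le_of_isPath {V : Type*} {T : SimpleGraph V} (hT : T.IsAcyclic)
    {J : T.Subgraph} (hJ : J.Connected) {x y : V} (q : T.Walk x y) (hq : q.IsPath)
    (hx : x ∈ J.verts) (hy : y ∈ J.verts) : q.toSubgraph ≤ J := by
  classical
  obtain ⟨s, hs⟩ := (J.connected_iff_forall_exists_walk_subgraph.1 hJ).2 hx hy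
  have h := congrArg Subtype.val ((hT.subsingleton_path x y).elim ⟨q, hq⟩ s.toPath)
  simp only at h
  rw [h]
  exact (s.toSubgraph_bypass_le_toSubgraph).trans hs

lemma connected_deleteVerts_of_leaf {V : Type*} {T : SimpleGraph V} {I : T.Subgraph}
    (hI : I.Connected) {r u v : V} (hr : r ∈ I.verts) (hvr : v ≠ r)
    (hu : I.neighborSet v = {u}) : (I.deleteVerts {v}).Connected := by
  have hpre : (I.coe.induce {x : I.verts | (x : V) ≠ v}).Preconnected := by
    refine hI.coe.preconnected.induce_of_degree_eq_one fun x hx a ha b hb => ?_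
    have hxv : (x : V) = v := by simpa using hx
    have ha' : (a : V) ∈ I.neighborSet v := hxv ▸ ha
    have hb' : (b : V) ∈ I.neighborSet v := hxv ▸ hb
    rw [hu] at ha' hb'
    exact Subtype.ext (ha'.trans hb'.symm)
  have hcon : (I.coe.induce {x : I.verts | (x : V) ≠ v}).Connected :=
    { preconnected := hpre, nonempty := ⟨⟨⟨r, hr⟩, hvr.symm⟩⟩ }
  let f : I.coe.induce {x : I.verts | (x : V) ≠ v} →g (I.deleteVerts {v}).coe :=
    { toFun := fun x => ⟨x.1.1, x.1.2, x.2⟩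
      map_rel' := fun {a b} hab => ⟨⟨a.1.2, a.2⟩, ⟨b.1.2, b.2⟩, hab⟩ }
  exact ⟨hcon.map f fun y => ⟨⟨⟨y.1, y.2.1⟩, y.2.2⟩, rfl⟩⟩

lemma immCost_deleteVerts_lt {V : Type*} [Finite V] {T : SimpleGraph V} {I : T.Subgraph}
    {u v : V} (huv : I.Adj v u) : immCost (I.deleteVerts {v}) < immCost I := by
  have hss : (I.deleteVerts {v}).edgeSet ⊂ I.edgeSet := by
    refine ⟨Subgraph.edgeSet_mono Subgraph.deleteVerts_le, fun h => ?_⟩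
    have h' : s(v, u) ∈ (I.deleteVerts {v}).edgeSet := h huv
    rw [Subgraph.mem_edgeSet, Subgraph.deleteVerts_adj] at h'
    exact h'.2.1 rfl
  have := Set.ncard_lt_ncard hss (Set.toFinite _)
  unfold immCost
  omega

theorem stmt_0 {V : Type*} [Fintype V] (T : SimpleGraph V) (r : V) (p : ℕ)
    (hT : T.IsTree) (hp : 2 * treeHeight T r ≤ p)
    (𝓘 : Finset T.Subgraph) (hopt : MinDistOptimal r p 𝓘) :
    ∀ I ∈ 𝓘, ∀ v : V, IsImmLeaf r I v → IsTreeLeaf T r v := by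
  classical
  rintro I hI v ⟨hvr, hv1⟩
  refine ⟨hvr, ?_⟩
  by_contra hne
  obtain ⟨⟨hfeas, hcov⟩, hmin⟩ := hopt
  obtain ⟨⟨hIc, hrI⟩, hIp⟩ := hfeas I hI
  obtain ⟨u, hu⟩ := Set.ncard_eq_one.1 hv1
  have huv : I.Adj v u := by
    have : u ∈ I.neighborSet v := by simp [hu]
    exact this
  obtain ⟨w, hvw, hwu⟩ : ∃ w, T.Adj v w ∧ w ≠ u := by
    by_contra! hcon
    refine hne (Set.ncard_eq_one.2 ⟨u, Set.eq_singleton_iff_unique_mem.2 ⟨huv.adj_sub, hcon⟩⟩)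
  have hvI : v ∈ I.verts := I.edge_vert huv
  have hwI : w ∉ I.verts := by
    intro hwI
    have hle := toSubgraph_le_of_isPath hT.isAcyclic hIc hvw.toWalk
      (Walk.IsPath.of_adj hvw) hvI hwI
    have hadj : w ∈ I.neighborSet v := hle.2 (by simp)
    rw [hu] at hadj
    exact hwu hadj
  obtain ⟨q, hq⟩ := hT.connected.exists_isPath r v
  have hqI := toSubgraph_le_of_isPath hT.isAcyclic hIc q hq hrI hvI
  have hwq : w ∉ q.support := fun h => hwI (hqI.1 (q.mem_verts_toSubgraph.2 h))
  obtain ⟨J, hJ, hwJ⟩ := hcov w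
  have hJI : J ≠ I := by
    rintro rfl
    exact hwI hwJ
  have hvJ : v ∈ J.verts := by
    refine (toSubgraph_le_of_isPath hT.isAcyclic (hfeas J hJ).1.1 (q.concat hvw)
      (hq.concat hwq hvw) (hfeas J hJ).1.2 hwJ).1 ?_
    simp [Walk.support_concat]
  have hlt := immCost_deleteVerts_lt huv
  have hfeas' : IsFeasible r p (insert (I.deleteVerts {v}) (𝓘.erase I)) := by
    refine ⟨fun K hK => ?_, fun x => ?_⟩
    · rcases Finset.mem_insert.1 hK with rfl | hK
      · exact ⟨⟨connected_deleteVerts_of_leaf hIc hrI hvr hu, hrI, hvr.symm⟩, hlt.le.trans hIp⟩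
      · exact hfeas K (Finset.mem_of_mem_erase hK)
    · by_cases hxv : x = v
      · subst hxv
        exact ⟨J, Finset.mem_insert_of_mem (Finset.mem_erase.2 ⟨hJI, hJ⟩), hvJ⟩
      · obtain ⟨K, hK, hxK⟩ := hcov x
        by_cases hKI : K = I
        · subst hKI
          exact ⟨_, Finset.mem_insert_self _ _, hxK, hxv⟩
        · exact ⟨K, Finset.mem_insert_of_mem (Finset.mem_erase.2 ⟨hKI, hK⟩), hxK⟩
  have hle := hmin _ hfeas'
  -- Only an inequality holds here: `I` without `v` may already belong to the covering.
  have hins : totalCost (insert (I.deleteVerts {v}) (𝓘.erase I)) ≤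
      immCost (I.deleteVerts {v}) + ∑ K ∈ 𝓘.erase I, immCost K := by
    unfold totalCost
    by_cases hmem : I.deleteVerts {v} ∈ 𝓘.erase I
    · rw [Finset.insert_eq_of_mem hmem]
      omega
    · rw [Finset.sum_insert hmem]
  have hsum : immCost I + ∑ K ∈ 𝓘.erase I, immCost K = totalCost 𝓘 :=
    Finset.add_sum_erase 𝓘 immCost hI
  omega
end

section
/- Let T be a finite tree rooted at r, let p ≥ 2·h(T), and let k ≥ 1. There exists an optimal solution of the Min-Time problem with k robots, i.e. a feasible covering 𝓘 together with a partition of 𝓘 into k parts S_1,…,S_k minimizing max_{1≤i≤k} Σ_{I∈S_i} C(I), such that every leaf of every immersion I ∈ 𝓘 is a leaf of T. -/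
/-!
Among all pairs (feasible covering, assignment) of minimum makespan, take one of minimum total cost.
Suppose an immersion `I` of it has a leaf `v` that is not a leaf of the tree. Then `v` has a
tree-neighbour `w` outside `I`, and since the path from `r` to `v` stays in `I`, the vertex `v` lies
on the path from `r` to `w`. So the immersion covering `w`, which is not `I`, also covers `v`
(`exists_other_cover`). Deleting `v` from `I` leaves an immersion (`connected_deleteVerts_leaf`) that
is strictly cheaper (`immCost_deleteVerts_lt`), so replacing `I` by it gives a feasible covering of
no larger makespan and smaller total cost (`exists_replace`), a contradiction.

The hypothesis `2 * h(T) ≤ p` makes every root-to-vertex path affordable, so that feasible coverings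
exist.
-/


open SimpleGraph Finset

theorem exists_path_le_of_connected {V : Type*} {G : SimpleGraph V} {I : G.Subgraph}
    (hI : I.Connected) {x y : V} (hx : x ∈ I.verts) (hy : y ∈ I.verts) :
    ∃ q : G.Walk x y, q.IsPath ∧ q.toSubgraph ≤ I := by
  classical
  obtain ⟨q, hq⟩ := ((Subgraph.connected_iff_forall_exists_walk_subgraph I).1 hI).2 hx hy
  exact ⟨q.bypass, q.bypass_isPath, Walk.toSubgraph_bypass_le_toSubgraph.trans hq⟩

theorem mem_verts_of_mem_support {V : Type*} {G : SimpleGraph V} {I : G.Subgraph} {x y z : V}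
    {q : G.Walk x y} (hq : q.toSubgraph ≤ I) (hz : z ∈ q.support) : z ∈ I.verts :=
  hq.1 (q.mem_verts_toSubgraph.2 hz)

/-- Deleting a degree-one vertex keeps a subgraph connected: a path between two other vertices
cannot pass through it, as interior vertices of a path have degree two. -/
theorem connected_deleteVerts_leaf {V : Type*} {G : SimpleGraph V} {I : G.Subgraph} {r v : V}
    (hI : I.Connected) (hr : r ∈ I.verts) (hvr : v ≠ r) (hv : (I.neighborSet v).ncard = 1) :
    (I.deleteVerts {v}).Connected := by
  rw [Subgraph.connected_iff_forall_exists_walk_subgraph]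
  refine ⟨⟨r, hr, fun h => hvr h.symm⟩, ?_⟩
  rintro x y ⟨hx, hxv⟩ ⟨hy, hyv⟩
  obtain ⟨q, hqp, hq⟩ := exists_path_le_of_connected hI hx hy
  have hvq : v ∉ q.support := by
    intro hmem
    obtain ⟨i, hi, hil⟩ := Walk.mem_support_iff_exists_getVert.1 hmem
    have h0 : i ≠ 0 := by
      rintro rfl
      exact hxv (by simpa using hi)
    have hlt : i < q.length := by
      refine lt_of_le_of_ne hil ?_
      rintro rfl
      exact hyv (by simpa using hi)
    have h2 := hqp.ncard_neighborSet_toSubgraph_internal_eq_two h0 hlt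
    rw [hi] at h2
    have hfin : (I.neighborSet v).Finite := Set.finite_of_ncard_ne_zero (by omega)
    have hsub : q.toSubgraph.neighborSet v ⊆ I.neighborSet v := fun z hz => hq.2 hz
    have := Set.ncard_le_ncard hsub hfin
    omega
  have hne : ∀ z ∈ q.toSubgraph.verts, z ∉ ({v} : Set V) := by
    rintro z hz rfl
    exact hvq (q.mem_verts_toSubgraph.1 hz)
  refine ⟨q, fun z hz => ⟨hq.1 hz, hne z hz⟩, fun z z' hzz => ?_⟩
  exact Subgraph.deleteVerts_adj.2 ⟨hq.1 hzz.fst_mem, hne _ hzz.fst_mem, hq.1 hzz.snd_mem,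
    hne _ hzz.snd_mem, hq.2 hzz⟩

theorem immCost_deleteVerts_lt_s1 {V : Type*} [Finite V] {G : SimpleGraph V} {I : G.Subgraph} {v : V}
    (hv : (I.neighborSet v).ncard = 1) : immCost (I.deleteVerts {v}) < immCost I := by
  obtain ⟨u, hu⟩ := Set.ncard_eq_one.1 hv
  have hvu : I.Adj v u := by
    have : u ∈ I.neighborSet v := by simp [hu]
    exact this
  have hss : (I.deleteVerts {v}).edgeSet ⊂ I.edgeSet := by
    refine ⟨Subgraph.edgeSet_mono Subgraph.deleteVerts_le, fun h => ?_⟩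
    have h' : s(v, u) ∈ (I.deleteVerts {v}).edgeSet := h hvu
    exact (Subgraph.deleteVerts_adj.1 h').2.1 rfl
  have := Set.ncard_lt_ncard hss (Set.toFinite _)
  unfold immCost
  omega

/-- A leaf of `I` that is not a leaf of the tree is also covered by another immersion: the one
covering a neighbour farther away from the root. -/
theorem exists_other_cover {V : Type*} [Fintype V] {T : SimpleGraph V} {r : V} {p : ℕ}
    (hT : T.IsTree) {𝓘 : Finset T.Subgraph} (hf : IsFeasible r p 𝓘) {I : T.Subgraph} (hI : I ∈ 𝓘)
    {v : V} (hv : IsImmLeaf r I v) (hv' : ¬ IsTreeLeaf T r v) :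
    ∃ J ∈ 𝓘, J ≠ I ∧ v ∈ J.verts := by
  obtain ⟨hvr, hcard⟩ := hv
  obtain ⟨⟨hIc, hrI⟩, -⟩ := hf.1 I hI
  obtain ⟨u, hu⟩ := Set.ncard_eq_one.1 hcard
  have hvu : I.Adj v u := by
    have : u ∈ I.neighborSet v := by simp [hu]
    exact this
  obtain ⟨w, hvw, hwu⟩ : ∃ w, T.Adj v w ∧ w ≠ u := by
    by_contra! hcon
    refine hv' ⟨hvr, Set.ncard_eq_one.2 ⟨u, ?_⟩⟩
    ext z
    exact ⟨fun hz => hcon z hz, fun hz => by rw [Set.mem_singleton_iff.1 hz]; exact hvu.adj_sub⟩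
  -- If `w` were in `I`, the path joining `v` to `w` inside `I` would be the edge `vw` by uniqueness.
  have hwI : w ∉ I.verts := by
    intro hw
    obtain ⟨q, hqp, hq⟩ := exists_path_le_of_connected hIc hvu.fst_mem hw
    have heq : q = hvw.toWalk := (hT.existsUnique_path v w).unique hqp (by simp [hvw.ne])
    have hadj : I.Adj v w := hq.2 (by rw [heq]; simp)
    have : w ∈ I.neighborSet v := hadj
    rw [hu] at this
    exact hwu this
  obtain ⟨J, hJ, hwJ⟩ := hf.2 w
  refine ⟨J, hJ, fun h => hwI (h ▸ hwJ), ?_⟩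
  obtain ⟨⟨hJc, hrJ⟩, -⟩ := hf.1 J hJ
  obtain ⟨q, hqp, hq⟩ := exists_path_le_of_connected hIc hrI hvu.fst_mem
  obtain ⟨q', hqp', hq'⟩ := exists_path_le_of_connected hJc hrJ hwJ
  exact mem_verts_of_mem_support hq' (hT.isAcyclic.mem_support_of_ne_mem_support_of_adj_of_isPath
    hqp' hqp hvw.symm fun h => hwI (mem_verts_of_mem_support hq h))

/-- Replacing an element of a set by a cheaper one, with a suitable reassignment, increases no
robot's load and strictly decreases the total. The replacement may already belong to the set, in
which case it keeps its robot. -/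
theorem exists_replace {α : Type*} [DecidableEq α] {k : ℕ} {S : Finset α} {x y : α} (hx : x ∈ S)
    (c : α → ℕ) (hc : c y < c x) (a : α → Fin k) :
    ∃ b : α → Fin k,
      (∀ i, ∑ z ∈ (insert y (S.erase x)).filter (fun z => b z = i), c z ≤
        ∑ z ∈ S.filter (fun z => a z = i), c z) ∧
      ∑ z ∈ insert y (S.erase x), c z < ∑ z ∈ S, c z := by
  have hyx : y ≠ x := by
    rintro rfl
    exact lt_irrefl _ hc
  have hS := Finset.add_sum_erase S c hx
  by_cases hy : y ∈ S
  · have hins : insert y (S.erase x) = S.erase x :=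
      Finset.insert_eq_of_mem (Finset.mem_erase.2 ⟨hyx, hy⟩)
    rw [hins]
    refine ⟨a, fun i => ?_, by omega⟩
    exact Finset.sum_le_sum_of_subset (Finset.filter_subset_filter _ (Finset.erase_subset _ _))
  · have hy' : y ∉ S.erase x := fun h => hy (Finset.mem_of_mem_erase h)
    refine ⟨Function.update a y (a x), fun i => ?_, ?_⟩
    · rw [Finset.sum_filter, Finset.sum_filter, Finset.sum_insert hy',
        ← Finset.add_sum_erase S _ hx]
      refine add_le_add ?_ (Finset.sum_le_sum fun z hz => ?_)
      · simp only [Function.update_self]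
        split_ifs
        · exact hc.le
        · exact le_rfl
      · have hzy : z ≠ y := by
          rintro rfl
          exact hy' hz
        rw [Function.update_of_ne hzy]
    · rw [Finset.sum_insert hy']
      omega

theorem exists_feasible {V : Type*} [Fintype V] {T : SimpleGraph V} {r : V} {p : ℕ}
    (hT : T.IsTree) (hp : 2 * treeHeight T r ≤ p) :
    ∃ 𝓘 : Finset T.Subgraph, IsFeasible r p 𝓘 := by
  classical
  have hfin : {I : T.Subgraph | IsImmersion r I ∧ immCost I ≤ p}.Finite := Set.toFinite _
  refine ⟨hfin.toFinset, fun I hI => hfin.mem_toFinset.1 hI, fun v => ?_⟩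
  obtain ⟨q, hq⟩ := hT.connected.exists_walk_length_eq_dist r v
  refine ⟨q.toSubgraph, hfin.mem_toFinset.2 ⟨⟨q.toSubgraph_connected, by simp⟩, ?_⟩, by simp⟩
  have h1 : q.toSubgraph.edgeSet = (q.edges.toFinset : Set (Sym2 V)) := by
    ext e
    simp
  have h2 : q.toSubgraph.edgeSet.ncard ≤ q.length := by
    rw [h1, Set.ncard_coe_finset, ← q.length_edges]
    exact q.edges.toFinset_card_le
  have h3 : T.dist r v ≤ treeHeight T r :=
    Finset.le_sup (f := fun v => T.dist r v) (Finset.mem_univ v)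
  unfold immCost
  omega

theorem stmt_1 {V : Type*} [Fintype V] (T : SimpleGraph V) (r : V) (p k : ℕ)
    (hT : T.IsTree) (hp : 2 * treeHeight T r ≤ p) (hk : 1 ≤ k) :
    ∃ (𝓘 : Finset T.Subgraph) (a : T.Subgraph → Fin k),
      MinTimeOptimal r p k 𝓘 a ∧
      ∀ I ∈ 𝓘, ∀ v : V, IsImmLeaf r I v → IsTreeLeaf T r v := by
  classical
  obtain ⟨𝓘₀, h₀⟩ := exists_feasible hT hp
  let F : Set (Finset T.Subgraph × (T.Subgraph → Fin k)) := {s | IsFeasible r p s.1}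
  have hF : F.Nonempty := ⟨(𝓘₀, fun _ => ⟨0, hk⟩), h₀⟩
  -- Minimize the makespan first and the total cost second.
  let f : Finset T.Subgraph × (T.Subgraph → Fin k) → ℕ ×ₗ ℕ :=
    fun s => toLex (makespan k s.1 s.2, totalCost s.1)
  obtain ⟨⟨𝓘, a⟩, hfeas, hmin⟩ : ∃ s ∈ F, ∀ t ∈ F, f s ≤ f t :=
    ⟨Function.argminOn f F hF, Function.argminOn_mem f F hF,
      fun t ht => Function.argminOn_le f F ht⟩
  have hfeas : IsFeasible r p 𝓘 := hfeas
  refine ⟨𝓘, a, ⟨hfeas, fun 𝓙 b h𝓙 => ?_⟩, fun I hI v hv => ?_⟩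
  · have := Prod.Lex.toLex_le_toLex.1 (hmin (𝓙, b) h𝓙)
    rcases this with h | h
    · exact h.le
    · exact h.1.le
  by_contra hv'
  obtain ⟨J, hJ, hJI, hvJ⟩ := exists_other_cover hT hfeas hI hv hv'
  obtain ⟨⟨hIc, hrI⟩, hIp⟩ := hfeas.1 I hI
  have hlt := immCost_deleteVerts_lt_s1 hv.2
  obtain ⟨b, hb, htot⟩ := exists_replace hI immCost hlt a
  have hnew : IsFeasible r p (insert (I.deleteVerts {v}) (𝓘.erase I)) := by
    refine ⟨fun K hK => ?_, fun x => ?_⟩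
    · rcases Finset.mem_insert.1 hK with rfl | hK
      · exact ⟨⟨connected_deleteVerts_leaf hIc hrI hv.1 hv.2, hrI, fun h => hv.1 h.symm⟩,
          hlt.le.trans hIp⟩
      · exact hfeas.1 K (Finset.mem_of_mem_erase hK)
    · by_cases hxv : x = v
      · subst hxv
        exact ⟨J, Finset.mem_insert_of_mem (Finset.mem_erase.2 ⟨hJI, hJ⟩), hvJ⟩
      · obtain ⟨K, hK, hxK⟩ := hfeas.2 x
        by_cases hKI : K = I
        · subst hKI
          exact ⟨_, Finset.mem_insert_self _ _, hxK, hxv⟩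
        · exact ⟨K, Finset.mem_insert_of_mem (Finset.mem_erase.2 ⟨hKI, hK⟩), hxK⟩
  have hms : makespan k (insert (I.deleteVerts {v}) (𝓘.erase I)) b ≤ makespan k 𝓘 a :=
    Finset.sup_mono_fun fun i _ => hb i
  rcases Prod.Lex.toLex_le_toLex.1 (hmin (_, b) hnew) with h | h
  · exact absurd h hms.not_gt
  · exact absurd h.2 (not_le.2 htot)
end

section
/- Let T be a finite tree rooted at r and let p ≥ 2·h(T). In every optimal solution 𝓘 of the Min-Distance problem (a feasible covering minimizing the total cost Σ_{I∈𝓘} C(I)), every leaf of T belongs to the vertex set of exactly one immersion of 𝓘. -/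
/-!
Exchange argument. If a leaf `l` of the tree lay in two distinct immersions `I` and `J` of an optimal
covering, `J` could be replaced by `J - l`. Removing a vertex of degree one keeps `J` connected
(`connected_deleteVerts_leaf`), the root survives since `l ≠ r`, and `l` is still covered by `I`, so
the new family is feasible. As `J` is connected and contains both `l` and `r ≠ l`, it has an edge
at `l`, which is lost, so the total cost strictly decreases (`immCost_deleteVerts_lt`), contradicting
optimality. If `J - l` already belongs to the family, the two copies merge, which only lowers the
cost further.
-/

open SimpleGraph Finset

/-- Deleting from a connected subgraph `J` a vertex `l` with a single neighbour in `G` leaves it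
connected: a path in `J` between two other vertices cannot pass through `l`. -/
lemma connected_deleteVerts_leaf_s3 {V : Type*} {G : SimpleGraph V} {r l : V} {J : G.Subgraph}
    (hJ : J.Connected) (hr : r ∈ J.verts) (hl : IsTreeLeaf G r l) :
    (J.deleteVerts {l}).Connected := by
  classical
  rw [Subgraph.connected_iff_forall_exists_walk_subgraph] at hJ ⊢
  refine ⟨⟨r, hr, fun h => hl.1 h.symm⟩, ?_⟩
  rintro u v ⟨hu, hul⟩ ⟨hv, hvl⟩
  obtain ⟨w, hw⟩ := hJ.2 hu hv
  have hle : w.bypass.toSubgraph ≤ J := Walk.toSubgraph_bypass_le_toSubgraph.trans hw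
  have hsub : (G.neighborSet l).Subsingleton := by
    obtain ⟨a, ha⟩ := Set.ncard_eq_one.mp hl.2
    rw [ha]
    exact Set.subsingleton_singleton
  have hlw : l ∉ w.bypass.support :=
    w.bypass_isPath.isTrail.not_mem_support_of_subsingleton_neighborSet
      (fun h => hul h.symm) (fun h => hvl h.symm) hsub
  have hne : ∀ x ∈ w.bypass.toSubgraph.verts, x ≠ l := by
    rintro x hx rfl
    exact hlw (w.bypass.mem_verts_toSubgraph.mp hx)
  refine ⟨w.bypass, fun x hx => ⟨hle.1 hx, hne x hx⟩, fun x y hxy => ?_⟩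
  exact Subgraph.deleteVerts_adj.mpr
    ⟨hle.1 hxy.fst_mem, hne x hxy.fst_mem, hle.1 hxy.snd_mem, hne y hxy.snd_mem, hle.2 hxy⟩

/-- Deleting from a connected subgraph `J` a vertex `l` that is not its only vertex removes at least
one edge, so it strictly lowers the cost. -/
lemma immCost_deleteVerts_lt_s3 {V : Type*} [Finite V] {G : SimpleGraph V} {r l : V} {J : G.Subgraph}
    (hJ : J.Connected) (hr : r ∈ J.verts) (hl : l ∈ J.verts) (hlr : l ≠ r) :
    immCost (J.deleteVerts {l}) < immCost J := by
  rw [Subgraph.connected_iff_forall_exists_walk_subgraph] at hJ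
  obtain ⟨w, hw⟩ := hJ.2 hl hr
  obtain ⟨x, hx⟩ : ∃ x, J.Adj l x := by
    cases w with
    | nil => exact absurd rfl hlr
    | @cons _ x _ h q => exact ⟨x, hw.2 (by simp)⟩
  have hlt : (J.deleteVerts {l}).edgeSet.ncard < J.edgeSet.ncard := by
    refine Set.ncard_lt_ncard (Set.ssubset_iff_exists.mpr
      ⟨Subgraph.edgeSet_mono Subgraph.deleteVerts_le, s(l, x), hx, fun h => ?_⟩) (Set.toFinite _)
    exact (Subgraph.deleteVerts_adj.mp (Subgraph.mem_edgeSet.mp h)).2.1 rfl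
  unfold immCost
  omega

theorem stmt_3 {V : Type*} [Fintype V] (T : SimpleGraph V) (r : V) (p : ℕ)
    (hT : T.IsTree) (hp : 2 * treeHeight T r ≤ p)
    (𝓘 : Finset T.Subgraph) (hopt : MinDistOptimal r p 𝓘) :
    ∀ l : V, IsTreeLeaf T r l → ∃! I : T.Subgraph, I ∈ 𝓘 ∧ l ∈ I.verts := by
  classical
  intro l hl
  obtain ⟨⟨himm, hcov⟩, hmin⟩ := hopt
  obtain ⟨I, hI, hlI⟩ := hcov l
  refine ⟨I, ⟨hI, hlI⟩, ?_⟩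
  rintro J ⟨hJ, hlJ⟩
  by_contra hne
  obtain ⟨⟨hJc, hJr⟩, hJp⟩ := himm J hJ
  have hlt := immCost_deleteVerts_lt_s3 hJc hJr hlJ hl.1
  have hfeas : IsFeasible r p (insert (J.deleteVerts {l}) (𝓘.erase J)) := by
    refine ⟨fun K hK => ?_, fun v => ?_⟩
    · rcases Finset.mem_insert.mp hK with rfl | hK
      · exact ⟨⟨connected_deleteVerts_leaf_s3 hJc hJr hl, hJr, fun h => hl.1 h.symm⟩,
          hlt.le.trans hJp⟩
      · exact himm K (Finset.mem_of_mem_erase hK)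
    · by_cases hvl : v = l
      · subst hvl
        exact ⟨I, Finset.mem_insert_of_mem (Finset.mem_erase.mpr ⟨fun h => hne h.symm, hI⟩), hlI⟩
      · obtain ⟨K, hK, hvK⟩ := hcov v
        by_cases hKJ : K = J
        · subst hKJ
          exact ⟨_, Finset.mem_insert_self _ _, hvK, hvl⟩
        · exact ⟨K, Finset.mem_insert_of_mem (Finset.mem_erase.mpr ⟨hKJ, hK⟩), hvK⟩
  have hle := hmin _ hfeas
  have hsum : totalCost (insert (J.deleteVerts {l}) (𝓘.erase J))
      ≤ immCost (J.deleteVerts {l}) + totalCost (𝓘.erase J) := by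
    unfold totalCost
    by_cases hmem : J.deleteVerts {l} ∈ 𝓘.erase J
    · rw [Finset.insert_eq_of_mem hmem]
      exact Nat.le_add_left _ _
    · rw [Finset.sum_insert hmem]
  have hsplit : immCost J + totalCost (𝓘.erase J) = totalCost 𝓘 :=
    Finset.add_sum_erase 𝓘 immCost hJ
  omega
end

section
/- Let T be a finite tree rooted at r and let p ≥ 2·h(T). There exists an optimal solution 𝓘 of the Min-Immersions problem (a feasible covering minimizing the number of immersions |𝓘|) such that every leaf of T belongs to the vertex set of exactly one immersion of 𝓘. -/
/-!
Feasible coverings exist: the shortest paths from the root to all vertices form one, since each has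
at most `treeHeight T r` edges. Among the coverings with the fewest immersions, take one whose
immersions have the smallest total number of vertices. If a leaf `l` lay in two of its immersions
`I ≠ J`, then `J` could be replaced by `J` with `l` deleted. This is still an immersion, because no
path between other vertices runs through a vertex of degree one, and `l` stays covered by `I`. The
number of immersions does not grow, while the total number of vertices drops: a contradiction.
-/

open SimpleGraph Finset

/-- Deleting a leaf keeps a subgraph connected: a path between two other vertices cannot pass through
the leaf, as an inner vertex of a path has two neighbours on it. -/
lemma isImmersion_deleteVerts_leaf {V : Type*} [Fintype V] {T : SimpleGraph V} {r l : V}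
    (hl : IsTreeLeaf T r l) {J : T.Subgraph} (hJ : IsImmersion r J) :
    IsImmersion r (J.deleteVerts {l}) := by
  classical
  have hr : r ∈ (J.deleteVerts {l}).verts := ⟨hJ.2, fun h => hl.1 h.symm⟩
  refine ⟨(Subgraph.connected_iff_forall_exists_walk_subgraph _).2 ⟨⟨r, hr⟩, ?_⟩, hr⟩
  rintro u v ⟨hu, hul⟩ ⟨hv, hvl⟩
  obtain ⟨w, hw⟩ := ((Subgraph.connected_iff_forall_exists_walk_subgraph _).1 hJ.1).2 hu hv
  have hq : w.bypass.IsPath := w.bypass_isPath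
  have hle : w.bypass.toSubgraph ≤ J := Walk.toSubgraph_bypass_le_toSubgraph.trans hw
  generalize w.bypass = q at hq hle
  have hlq : l ∉ q.support := by
    intro h
    obtain ⟨i, hi, hil⟩ := Walk.mem_support_iff_exists_getVert.1 h
    have h0 : i ≠ 0 := by
      rintro rfl
      exact hul (by simpa using hi)
    have hlen : i ≠ q.length := by
      rintro rfl
      exact hvl (by simpa using hi)
    have h2 := hq.ncard_neighborSet_toSubgraph_internal_eq_two h0 (by omega)
    rw [hi] at h2
    have h3 := Set.ncard_le_ncard (q.toSubgraph.neighborSet_subset l) (Set.toFinite _)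
    have h4 := hl.2
    omega
  have hne : ∀ x ∈ q.toSubgraph.verts, x ≠ l := by
    rintro x hx rfl
    exact hlq (q.mem_verts_toSubgraph.1 hx)
  refine ⟨q, fun x hx => ⟨hle.1 hx, hne x hx⟩, fun x y hxy => ?_⟩
  rw [Subgraph.deleteVerts_adj]
  exact ⟨hle.1 hxy.fst_mem, hne x hxy.fst_mem, hle.1 hxy.snd_mem, hne y hxy.snd_mem, hle.2 hxy⟩

lemma immCost_mono {V : Type*} [Fintype V] {G : SimpleGraph V} {I J : G.Subgraph} (h : I ≤ J) :
    immCost I ≤ immCost J :=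
  Nat.mul_le_mul_left 2 (Set.ncard_le_ncard (Subgraph.edgeSet_mono h) (Set.toFinite _))

/-- Shortest paths from the root to every vertex form a feasible covering. -/
lemma exists_isFeasible {V : Type*} [Fintype V] (T : SimpleGraph V) (r : V) (p : ℕ)
    (hT : T.IsTree) (hp : 2 * treeHeight T r ≤ p) :
    ∃ 𝓘 : Finset T.Subgraph, IsFeasible r p 𝓘 := by
  classical
  choose w hw using fun v => hT.connected.exists_walk_length_eq_dist r v
  refine ⟨Finset.univ.image fun v => (w v).toSubgraph, ?_, fun v =>
    ⟨_, Finset.mem_image_of_mem _ (Finset.mem_univ v), (w v).end_mem_verts_toSubgraph⟩⟩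
  intro I hI
  obtain ⟨v, -, rfl⟩ := Finset.mem_image.1 hI
  refine ⟨⟨(w v).toSubgraph_connected, (w v).start_mem_verts_toSubgraph⟩, ?_⟩
  have h1 : (w v).toSubgraph.edgeSet = ((w v).edges.toFinset : Set (Sym2 V)) := by
    ext e
    simp
  have h2 : (w v).toSubgraph.edgeSet.ncard ≤ (w v).length := by
    rw [h1, Set.ncard_coe_finset, ← Walk.length_edges]
    exact List.toFinset_card_le _
  have h3 : T.dist r v ≤ treeHeight T r :=
    Finset.le_sup (f := fun v => T.dist r v) (Finset.mem_univ v)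
  have h4 := hw v
  unfold immCost
  omega

theorem stmt_5 {V : Type*} [Fintype V] (T : SimpleGraph V) (r : V) (p : ℕ)
    (hT : T.IsTree) (hp : 2 * treeHeight T r ≤ p) :
    ∃ 𝓘 : Finset T.Subgraph, MinImmOptimal r p 𝓘 ∧
      ∀ l : V, IsTreeLeaf T r l → ∃! I : T.Subgraph, I ∈ 𝓘 ∧ l ∈ I.verts := by
  classical
  have hopt : ∃ 𝓘 : Finset T.Subgraph, MinImmOptimal r p 𝓘 := by
    obtain ⟨𝓘, h𝓘, hmin⟩ :=
      (Set.toFinite {𝓘 : Finset T.Subgraph | IsFeasible r p 𝓘}).exists_minimalFor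
        Finset.card _ (exists_isFeasible T r p hT hp)
    exact ⟨𝓘, h𝓘, fun 𝓙 h𝓙 => (le_total _ _).elim id (hmin h𝓙)⟩
  obtain ⟨𝓘, h𝓘, hmin⟩ :=
    (Set.toFinite {𝓘 : Finset T.Subgraph | MinImmOptimal r p 𝓘}).exists_minimalFor
      (fun 𝓘 => ∑ I ∈ 𝓘, I.verts.ncard) _ hopt
  obtain ⟨⟨himm, hcov⟩, hcard⟩ := id h𝓘
  refine ⟨𝓘, h𝓘, fun l hl => ?_⟩
  obtain ⟨I, hI, hlI⟩ := hcov l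
  refine ⟨I, ⟨hI, hlI⟩, ?_⟩
  rintro J ⟨hJ, hlJ⟩
  by_contra hJI
  set J' := J.deleteVerts {l} with hJ'
  set 𝓙 := insert J' (𝓘.erase J) with h𝓙
  have hle : J' ≤ J := Subgraph.deleteVerts_le
  have hfeas : IsFeasible r p 𝓙 := by
    refine ⟨fun K hK => ?_, fun v => ?_⟩
    · rcases Finset.mem_insert.1 hK with rfl | hK
      · exact ⟨isImmersion_deleteVerts_leaf hl (himm J hJ).1,
          (immCost_mono hle).trans (himm J hJ).2⟩
      · exact himm K (Finset.mem_of_mem_erase hK)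
    · by_cases hv : v = l
      · subst hv
        exact ⟨I, Finset.mem_insert_of_mem (Finset.mem_erase.2 ⟨Ne.symm hJI, hI⟩), hlI⟩
      · obtain ⟨K, hK, hvK⟩ := hcov v
        by_cases hKJ : K = J
        · subst hKJ
          exact ⟨J', Finset.mem_insert_self _ _, hvK, hv⟩
        · exact ⟨K, Finset.mem_insert_of_mem (Finset.mem_erase.2 ⟨hKJ, hK⟩), hvK⟩
  -- `J'` may already belong to the covering, so only an inequality of cardinalities holds.
  have hcard' : 𝓙.card ≤ 𝓘.card := by
    have h1 := Finset.card_insert_le J' (𝓘.erase J)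
    rw [← h𝓙] at h1
    have h2 := Finset.card_erase_add_one hJ
    omega
  have hopt' : MinImmOptimal r p 𝓙 := ⟨hfeas, fun 𝓚 h𝓚 => hcard'.trans (hcard 𝓚 h𝓚)⟩
  have hlt : J'.verts.ncard < J.verts.ncard := by
    refine Set.ncard_lt_ncard ⟨hle.1, fun h => ?_⟩ (Set.toFinite _)
    exact (h hlJ).2 rfl
  have hsum : ∑ K ∈ 𝓙, K.verts.ncard < ∑ K ∈ 𝓘, K.verts.ncard := by
    rw [← Finset.add_sum_erase 𝓘 _ hJ]
    refine lt_of_le_of_lt ?_ (Nat.add_lt_add_right hlt _)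
    by_cases hmem : J' ∈ 𝓘.erase J
    · rw [h𝓙, Finset.insert_eq_of_mem hmem]
      exact Nat.le_add_left _ _
    · rw [h𝓙, Finset.sum_insert hmem]
  exact absurd (hmin hopt' hsum.le) (not_le.2 hsum)
end

section
/- There exist a finite tree T rooted at r, an integer p ≥ 2·h(T), and an integer k ≥ 2 such that every optimal solution (𝓘, S_1,…,S_k) of the Min-Time problem with k robots has total cost Σ_{I∈𝓘} C(I) strictly greater than the optimal value of the Min-Distance problem on the same T, r, p. (For instance, the tree with edges {r,c}, {c,l1}, {c,l2} with p = 6 and k = 2: the unique Min-Distance optimum is the single immersion of cost 6, while the Min-Time optimum is 4, achieved only by two immersions of cost 4 each, with total cost 8.) -/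
/-!
The witness is the star with centre `1` and leaves `0, 2, 3`, rooted at the leaf `0`, with `p = 6`
and two robots. The whole tree is a single immersion of cost `6`, so the Min-Distance optimum is at
most `6`. The two paths `0-1-2` and `0-1-3`, given to different robots, show that the Min-Time
optimum is at most `4`. A connected subgraph containing the root and another leaf contains both
incident edges (`star_edge_mem`), hence an immersion reaching one of the leaves `2, 3` costs at least
`4` (`four_le_immCost`), and one reaching both costs at least `6` (`six_le_immCost`). An optimal
Min-Time solution therefore covers `2` and `3` by distinct immersions, and its total cost is at
least `8`.
-/

open SimpleGraph Finset

/-- The star with centre `1` and leaves `0, 2, 3`. -/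
abbrev star4 : SimpleGraph (Fin 4) := starGraph 1

/-- Each leaf of a connected subgraph of the star with at least two vertices is joined in it to the
centre, its only possible neighbour. -/
lemma star_edge_mem {I : star4.Subgraph} (hI : I.Connected) {x y : Fin 4}
    (hx : x ∈ I.verts) (hy : y ∈ I.verts) (hxy : x ≠ y) (hx1 : x ≠ 1) :
    s(x, 1) ∈ I.edgeSet := by
  have : Nontrivial I.verts := ⟨⟨x, hx⟩, ⟨y, hy⟩, by simpa using hxy⟩
  obtain ⟨z, hz⟩ := hI.preconnected.exists_adj_of_nontrivial ⟨x, hx⟩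
  have h := starGraph_adj.1 hz.adj_sub
  obtain rfl : z = 1 := h.2.resolve_left hx1
  exact hz

lemma four_le_immCost {I : star4.Subgraph} (hI : IsImmersion 0 I) {x : Fin 4}
    (hx : x ∈ I.verts) (hx0 : x ≠ 0) (hx1 : x ≠ 1) : 4 ≤ immCost I := by
  have h0 := star_edge_mem hI.1 hI.2 hx hx0.symm (by decide)
  have h1 := star_edge_mem hI.1 hx hI.2 hx0 hx1
  have hsub : ({s(0, 1), s(x, 1)} : Set (Sym2 (Fin 4))) ⊆ I.edgeSet := by
    rintro e (rfl | rfl) <;> assumption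
  have hle := Set.ncard_le_ncard hsub (Set.toFinite _)
  rw [Set.ncard_pair (by simpa using hx0.symm)] at hle
  unfold immCost
  omega

lemma six_le_immCost {I : star4.Subgraph} (hI : IsImmersion 0 I)
    (h2 : 2 ∈ I.verts) (h3 : 3 ∈ I.verts) : 6 ≤ immCost I := by
  have e0 := star_edge_mem hI.1 hI.2 h2 (by decide) (by decide)
  have e2 := star_edge_mem hI.1 h2 h3 (by decide) (by decide)
  have e3 := star_edge_mem hI.1 h3 h2 (by decide) (by decide)
  have hsub : (({s(0, 1), s(2, 1), s(3, 1)} : Finset (Sym2 (Fin 4))) : Set (Sym2 (Fin 4)))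
      ⊆ I.edgeSet := by
    intro e he
    simp only [coe_insert, coe_singleton] at he
    rcases he with rfl | rfl | rfl <;> assumption
  have hle := Set.ncard_le_ncard hsub (Set.toFinite _)
  rw [Set.ncard_coe_finset] at hle
  have hcard : ({s(0, 1), s(2, 1), s(3, 1)} : Finset (Sym2 (Fin 4))).card = 3 := by decide
  unfold immCost
  omega

/-- The path from the root `0` through the centre to the vertex `x ≠ 1`. -/
def pathTo (x : Fin 4) (hx : x ≠ 1) : star4.Walk 0 x :=
  .cons (v := 1) (by decide) (.cons (starGraph_adj.2 ⟨hx.symm, .inl rfl⟩) .nil)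

/-- A walk visiting every vertex of the star; its subgraph is the whole tree. -/
def tour : star4.Walk 0 3 :=
  .cons (v := 1) (by decide) (.cons (v := 2) (by decide)
    (.cons (v := 1) (by decide) (.cons (by decide) .nil)))

lemma isImmersion_toSubgraph {x : Fin 4} (w : star4.Walk 0 x) : IsImmersion 0 w.toSubgraph :=
  ⟨w.toSubgraph_connected, w.start_mem_verts_toSubgraph⟩

lemma immCost_toSubgraph {x : Fin 4} (w : star4.Walk 0 x) :
    immCost w.toSubgraph = 2 * w.edges.toFinset.card := by
  rw [immCost, Walk.edgeSet_toSubgraph, ← Set.ncard_coe_finset]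
  congr 2
  ext e
  simp

lemma immCost_pathTo (x : Fin 4) (hx : x ≠ 1) (hx0 : x ≠ 0) :
    immCost (pathTo x hx).toSubgraph = 4 := by
  rw [immCost_toSubgraph]
  revert x
  decide

lemma isFeasible_tour : IsFeasible 0 6 {tour.toSubgraph} := by
  refine ⟨fun I hI => ?_, fun v => ⟨_, mem_singleton_self _, ?_⟩⟩
  · rw [mem_singleton.1 hI]
    refine ⟨isImmersion_toSubgraph _, ?_⟩
    rw [immCost_toSubgraph]
    decide
  · rw [Walk.mem_verts_toSubgraph]
    revert v
    decide

lemma totalCost_tour : totalCost {tour.toSubgraph} = 6 := by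
  rw [totalCost, sum_singleton, immCost_toSubgraph]
  decide

open Classical in
/-- The two root-to-leaf paths, one for each robot, form a Min-Time solution of makespan at most
`4`. -/
lemma exists_makespan_le_four : ∃ (𝓙 : Finset star4.Subgraph) (b : star4.Subgraph → Fin 2),
    IsFeasible 0 6 𝓙 ∧ makespan 2 𝓙 b ≤ 4 := by
  set A := (pathTo 2 (by decide)).toSubgraph with hA
  set B := (pathTo 3 (by decide)).toSubgraph with hB
  have cA : immCost A = 4 := immCost_pathTo _ _ (by decide)
  have cB : immCost B = 4 := immCost_pathTo _ _ (by decide)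
  refine ⟨{A, B}, fun I => if I = A then 0 else 1, ⟨?_, ?_⟩, ?_⟩
  · intro I hI
    rcases mem_insert.1 hI with rfl | hI
    · exact ⟨isImmersion_toSubgraph _, by omega⟩
    · rw [mem_singleton.1 hI]
      exact ⟨isImmersion_toSubgraph _, by omega⟩
  · intro v
    by_cases hv : v = 3
    · subst hv
      exact ⟨B, by simp, Walk.end_mem_verts_toSubgraph _⟩
    · refine ⟨A, by simp, ?_⟩
      rw [hA, Walk.mem_verts_toSubgraph]
      revert v
      decide
  · refine Finset.sup_le fun i _ => ?_
    -- The robots `0` and `1` receive only `A` and only `B` respectively.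
    have key : ∀ C : star4.Subgraph, immCost C = 4 →
        (({A, B} : Finset star4.Subgraph).filter
          (fun I => (if I = A then (0 : Fin 2) else 1) = i)) ⊆ {C} →
        ∑ I ∈ ({A, B} : Finset star4.Subgraph).filter
          (fun I => (if I = A then (0 : Fin 2) else 1) = i), immCost I ≤ 4 := by
      intro C hC hs
      refine (sum_le_sum_of_subset hs).trans ?_
      rw [sum_singleton, hC]
    fin_cases i
    · refine key A cA fun I hI => ?_
      simp only [mem_filter] at hI
      by_contra h
      rw [mem_singleton] at h
      simp [h] at hI
    · refine key B cB fun I hI => ?_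
      simp only [mem_filter, mem_insert, mem_singleton] at hI ⊢
      by_cases h : I = A
      · simp [h] at hI
      · exact hI.1.resolve_left h

lemma immCost_le_makespan {k : ℕ} {𝓘 : Finset star4.Subgraph} (a : star4.Subgraph → Fin k)
    {I : star4.Subgraph} (hI : I ∈ 𝓘) : immCost I ≤ makespan k 𝓘 a :=
  (single_le_sum (f := immCost) (fun _ _ => Nat.zero_le _)
    (mem_filter.2 ⟨hI, rfl⟩ : I ∈ 𝓘.filter (fun J => a J = a I))).trans
    (le_sup (f := fun i : Fin k => ∑ I ∈ 𝓘.filter (fun I => a I = i), immCost I) (mem_univ (a I)))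

lemma treeHeight_star4_le : treeHeight star4 0 ≤ 2 := by
  refine Finset.sup_le fun v _ => ?_
  by_cases hv : v = 1
  · subst hv
    exact (dist_le (.cons (by decide) .nil : star4.Walk 0 1)).trans (by simp)
  · exact (dist_le (pathTo v hv)).trans (by simp [pathTo])

theorem stmt_11 :
    ∃ (V : Type) (inst : Fintype V) (T : SimpleGraph V) (r : V) (p k : ℕ),
      T.IsTree ∧ 2 * @treeHeight V inst T r ≤ p ∧ 2 ≤ k ∧
      ∀ (𝓘 : Finset T.Subgraph) (a : T.Subgraph → Fin k),
        @MinTimeOptimal V inst T r p k 𝓘 a →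
        ∀ 𝓙 : Finset T.Subgraph, @MinDistOptimal V inst T r p 𝓙 →
          totalCost 𝓙 < totalCost 𝓘 := by
  classical
  refine ⟨Fin 4, inferInstance, star4, 0, 6, 2, isTree_starGraph 1, ?_, le_rfl, ?_⟩
  · have := treeHeight_star4_le
    omega
  intro 𝓘 a h𝓘 𝓙 h𝓙
  have h6 : totalCost 𝓙 ≤ 6 := totalCost_tour ▸ h𝓙.2 _ isFeasible_tour
  obtain ⟨𝓚, b, hf, hb⟩ := exists_makespan_le_four
  have h4 : makespan 2 𝓘 a ≤ 4 := (h𝓘.2 𝓚 b hf).trans hb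
  obtain ⟨A, hA, hA2⟩ := h𝓘.1.2 2
  obtain ⟨B, hB, hB3⟩ := h𝓘.1.2 3
  have iA := (h𝓘.1.1 A hA).1
  have iB := (h𝓘.1.1 B hB).1
  have hAB : A ≠ B := by
    rintro rfl
    have := six_le_immCost iA hA2 hB3
    have := immCost_le_makespan a hA
    omega
  have cA := four_le_immCost iA hA2 (by decide) (by decide)
  have cB := four_le_immCost iB hB3 (by decide) (by decide)
  have hsum : ∑ I ∈ ({A, B} : Finset star4.Subgraph), immCost I ≤ totalCost 𝓘 :=
    sum_le_sum_of_subset (insert_subset hA (singleton_subset_iff.2 hB))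
  rw [sum_pair hAB] at hsum
  omega
end

section
/- There exist a finite tree T rooted at r and an integer p ≥ 2·h(T) such that the Min-Distance problem has two optimal solutions 𝓘 and 𝓘' (both feasible coverings achieving the minimum total cost) with |𝓘| ≠ |𝓘'|; that is, optimal Min-Distance solutions for the same instance need not have the same number of immersions. -/
/-!
The instance is the star with centre `0` and leaves `1`, `2`, rooted at the centre, with `p = 4`.
Both leaf edges can be covered by one immersion (the whole star) or by two (one per leaf), and
either way the total cost is `4`. No covering is cheaper: an immersion reaching a leaf contains
the edge from the root to that leaf (`edge_mem_of_leaf_mem`), so both edges are paid for at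
least once (`four_le_totalCost`).
-/

open SimpleGraph Finset

/-- The star on three vertices with centre `0`. -/
abbrev star3 : SimpleGraph (Fin 3) := starGraph 0

/-- The immersion of `star3` consisting of the single edge from the root to the leaf `v`. -/
def branch (v : Fin 3) (hv : 0 ≠ v) : star3.Subgraph :=
  star3.subgraphOfAdj (starGraph_center_adj hv)

lemma isImmersion_branch (v : Fin 3) (hv : 0 ≠ v) : IsImmersion 0 (branch v hv) :=
  ⟨Subgraph.subgraphOfAdj_connected _, by simp [branch]⟩

lemma immCost_branch (v : Fin 3) (hv : 0 ≠ v) : immCost (branch v hv) = 2 := by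
  simp [immCost, branch]

lemma ncard_edges : ({s(0, 1), s(0, 2)} : Set (Sym2 (Fin 3))).ncard = 2 :=
  Set.ncard_pair (by decide)

lemma immCost_sup : immCost (branch 1 (by decide) ⊔ branch 2 (by decide)) = 4 := by
  have h : (branch 1 (by decide) ⊔ branch 2 (by decide)).edgeSet = {s(0, 1), s(0, 2)} := by
    simp [branch, Set.ext_iff, or_comm]
  rw [immCost, h, ncard_edges]

lemma isImmersion_sup : IsImmersion 0 (branch 1 (by decide) ⊔ branch 2 (by decide)) := by
  refine ⟨Subgraph.connected_sup (isImmersion_branch _ _).1.preconnected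
    (isImmersion_branch _ _).1.preconnected ⟨0, ?_⟩, ?_⟩ <;> simp [branch]

lemma edge_mem_of_leaf_mem {I : star3.Subgraph} (hI : IsImmersion 0 I) {v : Fin 3}
    (hv : v ≠ 0) (hvI : v ∈ I.verts) : s(0, v) ∈ I.edgeSet := by
  have : Nontrivial I.verts := ⟨⟨⟨v, hvI⟩, ⟨0, hI.2⟩, by simpa using hv⟩⟩
  obtain ⟨w, hw⟩ := hI.1.preconnected.exists_adj_of_nontrivial ⟨v, hvI⟩
  -- the only neighbour of a leaf in the star is the centre
  have hw0 : w = 0 := (starGraph_adj.1 hw.adj_sub).2.resolve_left hv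
  subst hw0
  exact hw.symm

lemma four_le_totalCost {p : ℕ} {𝓙 : Finset star3.Subgraph} (h : IsFeasible 0 p 𝓙) :
    4 ≤ totalCost 𝓙 := by
  classical
  obtain ⟨I, hI, h1⟩ := h.2 1
  obtain ⟨J, hJ, h2⟩ := h.2 2
  have e1 := edge_mem_of_leaf_mem (h.1 I hI).1 (by decide) h1
  have e2 := edge_mem_of_leaf_mem (h.1 J hJ).1 (by decide) h2
  by_cases hIJ : I = J
  · subst hIJ
    have hc : 2 ≤ I.edgeSet.ncard :=
      ncard_edges ▸ Set.ncard_le_ncard (Set.pair_subset e1 e2) (Set.toFinite _)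
    have := Finset.single_le_sum (f := immCost) (fun _ _ => Nat.zero_le _) hI
    simp only [immCost, totalCost] at *
    omega
  · have c1 : 0 < I.edgeSet.ncard := (Set.ncard_pos (Set.toFinite _)).2 ⟨_, e1⟩
    have c2 : 0 < J.edgeSet.ncard := (Set.ncard_pos (Set.toFinite _)).2 ⟨_, e2⟩
    have hsub : ({I, J} : Finset star3.Subgraph) ⊆ 𝓙 := by
      simp [Finset.insert_subset_iff, hI, hJ]
    have := Finset.sum_le_sum_of_subset (f := immCost) hsub
    rw [Finset.sum_pair hIJ] at this
    simp only [immCost, totalCost] at *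
    omega

lemma treeHeight_star3 : treeHeight star3 0 ≤ 1 := by
  refine Finset.sup_le fun v _ => ?_
  by_cases hv : 0 = v
  · simp [← hv]
  · exact (dist_eq_one_iff_adj.2 (starGraph_center_adj hv)).le

lemma branch_ne : branch 1 (by decide) ≠ branch 2 (by decide) := by
  intro h
  have : (1 : Fin 3) ∈ (branch 2 (by decide)).verts := by
    rw [← h]; simp [branch]
  simp [branch] at this

theorem stmt_12 :
    ∃ (V : Type) (inst : Fintype V) (T : SimpleGraph V) (r : V) (p : ℕ),
      T.IsTree ∧ 2 * @treeHeight V inst T r ≤ p ∧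
      ∃ 𝓘 𝓘' : Finset T.Subgraph,
        @MinDistOptimal V inst T r p 𝓘 ∧ @MinDistOptimal V inst T r p 𝓘' ∧
        𝓘.card ≠ 𝓘'.card := by
  classical
  refine ⟨Fin 3, inferInstance, star3, 0, 4, isTree_starGraph 0, ?_,
    {branch 1 (by decide) ⊔ branch 2 (by decide)},
    {branch 1 (by decide), branch 2 (by decide)},
    ⟨⟨?_, ?_⟩, fun 𝓙 h => ?_⟩, ⟨⟨?_, ?_⟩, fun 𝓙 h => ?_⟩, ?_⟩
  · have := treeHeight_star3
    omega
  · simp only [Finset.mem_singleton, forall_eq]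
    exact ⟨isImmersion_sup, immCost_sup.le⟩
  · intro v
    fin_cases v <;> simp [branch]
  · rw [totalCost, Finset.sum_singleton, immCost_sup]
    exact four_le_totalCost h
  · intro I hI
    rcases Finset.mem_insert.1 hI with rfl | hI
    · exact ⟨isImmersion_branch _ _, by simp [immCost_branch]⟩
    · rw [Finset.mem_singleton.1 hI]
      exact ⟨isImmersion_branch _ _, by simp [immCost_branch]⟩
  · intro v
    fin_cases v <;> simp [branch]
  · rw [totalCost, Finset.sum_pair branch_ne, immCost_branch, immCost_branch]
    exact four_le_totalCost h
  · rw [Finset.card_pair branch_ne, Finset.card_singleton]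
    decide
end

section
/- There exist a finite tree T rooted at r and an integer p ≥ 2·h(T) such that no feasible covering 𝓘 of T is simultaneously optimal for the Min-Distance problem and for the Min-Immersions problem; that is, every feasible covering achieving the minimum total cost Σ_{I∈𝓘} C(I) has strictly more immersions than the minimum possible number of immersions. -/
/-!
The witness is a tree with nine edges: at the root hang two paths with three edges each and a
fork, that is, one edge `0 - 1` followed by the two leaves `2` and `3`. The budget is `p = 10`, so
an immersion has at most five edges.

* Two immersions suffice: each takes one long path together with one prong of the fork. The edge
  `0 - 1` is then used twice, for a total of ten edges.
* Three immersions, one for each branch at the root, use every edge exactly once, so the minimum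
  total cost is at most `18`.
* A covering of cost at most `18` uses every edge exactly once, so it keeps each of the three
  branches in a single immersion. With at most two immersions, two of the branches would share one,
  which needs six edges and exceeds the budget.

The link between subgraphs and vertex sets is that an immersion contains, with each vertex
`v` other than the root, the edge from `v` to its parent (`adj_parent`). This gives a lower bound on
cost in terms of vertices (`le_immCost`); for induced subgraphs on parent-closed vertex sets the
matching upper bound is `immCost_imm_le`.
-/

open SimpleGraph Finset

namespace Stmt13

/-- Parent function of the example tree; the root `0` is its own parent. The branches at the root
are the fork `{1, 2, 3}` and the paths `4 - 5 - 6` and `7 - 8 - 9`. -/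
def par : Fin 10 → Fin 10 := ![0, 0, 1, 1, 0, 4, 5, 0, 7, 8]

/-- The example tree: every vertex other than `0` is joined to its parent. -/
def tree : SimpleGraph (Fin 10) where
  Adj a b := (a ≠ 0 ∧ par a = b) ∨ (b ≠ 0 ∧ par b = a)
  symm := ⟨fun _ _ h => h.symm⟩
  loopless := ⟨by decide⟩

instance : DecidableRel tree.Adj := fun a b =>
  inferInstanceAs (Decidable ((a ≠ 0 ∧ par a = b) ∨ (b ≠ 0 ∧ par b = a)))

theorem par_par_par (v : Fin 10) : par (par (par v)) = 0 := by revert v; decide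

theorem adj_par {v : Fin 10} (hv : v ≠ 0) : tree.Adj v (par v) := Or.inl ⟨hv, rfl⟩

theorem reachable_par (v : Fin 10) : tree.Reachable (par v) v := by
  by_cases hv : v = 0
  · subst hv; exact Reachable.refl _
  · exact (adj_par hv).symm.reachable

theorem connected_tree : tree.Connected := by
  have h (v : Fin 10) : tree.Reachable 0 v := by
    have := ((reachable_par (par (par v))).trans (reachable_par (par v))).trans (reachable_par v)
    rwa [par_par_par] at this
  exact (connected_iff _).2 ⟨fun u v => (h u).symm.trans (h v), ⟨0⟩⟩

theorem isTree_tree : tree.IsTree := by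
  rw [isTree_iff_connected_and_card]
  refine ⟨connected_tree, ?_⟩
  rw [Nat.card_eq_fintype_card, Nat.card_eq_fintype_card]
  decide

theorem treeHeight_le : treeHeight tree 0 ≤ 3 := by
  have step (v : Fin 10) : tree.dist 0 v ≤ tree.dist 0 (par v) + 1 := by
    by_cases hv : v = 0
    · subst hv; simp
    · have h1 := connected_tree.dist_triangle (u := 0) (v := par v) (w := v)
      rwa [dist_eq_one_iff_adj.2 (adj_par hv).symm] at h1
  refine Finset.sup_le fun v _ => ?_
  have h1 := step v
  have h2 := step (par v)
  have h3 := step (par (par v))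
  rw [par_par_par, dist_self] at h3
  omega

/-- The set of descendants of `v` can be left only through the edge from `v` to its parent, and a
walk inside the immersion from `v` to the root has to leave it. The three disjuncts describing
descendants suffice because the tree has height three and `v` is not the root. -/
theorem adj_parent {I : tree.Subgraph} (hI : IsImmersion 0 I) {v : Fin 10} (hv : v ∈ I.verts)
    (h0 : v ≠ 0) : I.Adj v (par v) := by
  obtain ⟨w⟩ := hI.1.coe.preconnected ⟨v, hv⟩ ⟨0, hI.2⟩
  obtain ⟨d, -, h1, h2⟩ := w.exists_boundary_dart
    {w | w.1 = v ∨ par w.1 = v ∨ par (par w.1) = v} (Or.inl rfl)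
    (by
      have h : par 0 = 0 := rfl
      simp only [Set.mem_ofPred_eq, h, or_self]
      exact fun h => h0 h.symm)
  have hd : I.Adj d.fst.1 d.snd.1 := d.adj
  have key : ∀ v a b : Fin 10, v ≠ 0 → (a = v ∨ par a = v ∨ par (par a) = v) →
      ¬ (b = v ∨ par b = v ∨ par (par b) = v) → tree.Adj a b → a = v ∧ b = par v := by
    decide
  obtain ⟨ha, hb⟩ := key v _ _ h0 h1 h2 hd.adj_sub
  rwa [ha, hb] at hd

theorem injOn_parentEdge : Set.InjOn (fun v : Fin 10 => s(v, par v)) {v | v ≠ 0} := by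
  have : ∀ a b : Fin 10, a ≠ 0 → b ≠ 0 → s(a, par a) = s(b, par b) → a = b := by decide
  exact fun a ha b hb h => this a b ha hb h

open Classical in
theorem le_immCost {I : tree.Subgraph} (hI : IsImmersion 0 I) :
    2 * ∑ v : Fin 10, (if v ≠ 0 ∧ v ∈ I.verts then 1 else 0) ≤ immCost I := by
  rw [← Finset.card_filter, immCost, ← Set.ncard_coe_finset]
  refine Nat.mul_le_mul_left 2 (Set.ncard_le_ncard_of_injOn (fun v => s(v, par v)) ?_ ?_
    (Set.toFinite _))
  · intro v hv
    simp only [coe_filter, mem_univ, true_and, Set.mem_ofPred_eq] at hv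
    exact adj_parent hI hv.2 hv.1
  · exact injOn_parentEdge.mono fun v hv => by simp_all

/-- The subgraph of the tree induced on a finite set of vertices. -/
def imm (S : Finset (Fin 10)) : tree.Subgraph := (⊤ : tree.Subgraph).induce S

theorem isImmersion_imm {S : Finset (Fin 10)} (h0 : 0 ∈ S) (hS : ∀ v ∈ S, par v ∈ S) :
    IsImmersion 0 (imm S) := by
  refine ⟨⟨?_⟩, h0⟩
  have step (v : Fin 10) (hv : v ∈ S) :
      (imm S).coe.Reachable ⟨par v, hS v hv⟩ ⟨v, hv⟩ := by
    by_cases h : v = 0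
    · subst h; exact Reachable.refl _
    · exact Adj.reachable (show (imm S).Adj (par v) v from ⟨hS v hv, hv, (adj_par h).symm⟩)
  have h (v : (imm S).verts) : (imm S).coe.Reachable ⟨0, h0⟩ v := by
    obtain ⟨v, hv⟩ := v
    have := ((step _ (hS _ (hS v hv))).trans (step _ (hS v hv))).trans (step v hv)
    simpa only [par_par_par] using this
  exact (connected_iff _).2 ⟨fun u v => (h u).symm.trans (h v), ⟨⟨0, h0⟩⟩⟩

theorem immCost_imm_le {S : Finset (Fin 10)} :
    immCost (imm S) ≤ 2 * (S.erase 0).card := by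
  refine Nat.mul_le_mul_left 2 ?_
  have hsub : (imm S).edgeSet ⊆ ((S.erase 0).image fun v => s(v, par v) : Finset _) := by
    intro e
    induction e with
    | _ a b =>
      rintro ⟨ha, hb, h⟩
      rw [coe_image]
      dsimp only at ha hb h
      rcases h with ⟨hn, rfl⟩ | ⟨hn, rfl⟩
      · exact ⟨a, by simpa [hn] using ha, rfl⟩
      · exact ⟨b, by simpa [hn] using hb, Sym2.eq_swap⟩
  calc _ ≤ _ := Set.ncard_le_ncard hsub (Set.toFinite _)
    _ ≤ _ := by rw [Set.ncard_coe_finset]; exact card_image_le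

open Classical in
theorem exists_two : ∃ 𝓙 : Finset tree.Subgraph, IsFeasible 0 10 𝓙 ∧ 𝓙.card ≤ 2 := by
  refine ⟨{imm {0, 1, 2, 4, 5, 6}, imm {0, 1, 3, 7, 8, 9}}, ⟨?_, ?_⟩, card_le_two⟩
  · simp only [mem_insert, mem_singleton]
    rintro I (rfl | rfl)
    · exact ⟨isImmersion_imm (by decide) (by decide), immCost_imm_le.trans (by decide)⟩
    · exact ⟨isImmersion_imm (by decide) (by decide), immCost_imm_le.trans (by decide)⟩
  · intro v
    have : v ∈ ({0, 1, 2, 4, 5, 6} : Finset (Fin 10)) ∨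
      v ∈ ({0, 1, 3, 7, 8, 9} : Finset (Fin 10)) := by revert v; decide
    rcases this with h | h
    · exact ⟨imm {0, 1, 2, 4, 5, 6}, by simp, h⟩
    · exact ⟨imm {0, 1, 3, 7, 8, 9}, by simp, h⟩

open Classical in
theorem exists_cheap : ∃ 𝓙 : Finset tree.Subgraph, IsFeasible 0 10 𝓙 ∧ totalCost 𝓙 ≤ 18 := by
  have cost (S : Finset (Fin 10)) (hS : (S.erase 0).card ≤ 3) : immCost (imm S) ≤ 6 :=
    immCost_imm_le.trans (by omega)
  have c1 := cost {0, 1, 2, 3} (by decide)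
  have c2 := cost {0, 4, 5, 6} (by decide)
  have c3 := cost {0, 7, 8, 9} (by decide)
  refine ⟨{imm {0, 1, 2, 3}, imm {0, 4, 5, 6}, imm {0, 7, 8, 9}}, ⟨?_, ?_⟩, ?_⟩
  · simp only [mem_insert, mem_singleton]
    rintro I (rfl | rfl | rfl)
    · exact ⟨isImmersion_imm (by decide) (by decide), by omega⟩
    · exact ⟨isImmersion_imm (by decide) (by decide), by omega⟩
    · exact ⟨isImmersion_imm (by decide) (by decide), by omega⟩
  · intro v
    have : v ∈ ({0, 1, 2, 3} : Finset (Fin 10)) ∨ v ∈ ({0, 4, 5, 6} : Finset (Fin 10)) ∨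
      v ∈ ({0, 7, 8, 9} : Finset (Fin 10)) := by revert v; decide
    rcases this with h | h | h
    · exact ⟨imm {0, 1, 2, 3}, by simp, h⟩
    · exact ⟨imm {0, 4, 5, 6}, by simp, h⟩
    · exact ⟨imm {0, 7, 8, 9}, by simp, h⟩
  · refine (sum_le_card_nsmul _ _ 6 ?_).trans
      (Nat.mul_le_mul_right 6 (card_le_three (α := tree.Subgraph)))
    simp only [mem_insert, mem_singleton]
    rintro I (rfl | rfl | rfl) <;> assumption

open Classical in
/-- Numerical form of `le_immCost` and `adj_parent`: the indicator function `n` of the vertex set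
decreases away from the root, and its values off the root add up to at most half the cost. -/
theorem indicator_bounds {I : tree.Subgraph} (hI : IsImmersion 0 I) :
    ∃ n : Fin 10 → ℕ, (∀ v, v ∈ I.verts → 1 ≤ n v) ∧
      (n 2 ≤ n 1 ∧ n 3 ≤ n 1 ∧ n 5 ≤ n 4 ∧ n 6 ≤ n 5 ∧ n 8 ≤ n 7 ∧ n 9 ≤ n 8) ∧
      2 * (n 1 + n 2 + n 3 + n 4 + n 5 + n 6 + n 7 + n 8 + n 9) ≤ immCost I := by
  refine ⟨fun v => if v ∈ I.verts then 1 else 0, fun v hv => by simp [hv], ?_, ?_⟩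
  · have h (v : Fin 10) (h0 : v ≠ 0) :
        (if v ∈ I.verts then 1 else 0) ≤ if par v ∈ I.verts then 1 else 0 := by
      by_cases hv : v ∈ I.verts
      · simp [hv, (adj_parent hI hv h0).snd_mem]
      · simp [hv]
    exact ⟨h 2 (by decide), h 3 (by decide), h 5 (by decide), h 6 (by decide), h 8 (by decide),
      h 9 (by decide)⟩
  · have h := le_immCost hI
    have e : ∀ v : Fin 10, v ≠ 0 → (if v ≠ 0 ∧ v ∈ I.verts then 1 else 0)
        = if v ∈ I.verts then 1 else 0 := fun v hv => by simp [hv]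
    have e0 : (if (0 : Fin 10) ≠ 0 ∧ (0 : Fin 10) ∈ I.verts then 1 else 0) = 0 := by simp
    have hsum : ∀ f : Fin 10 → ℕ, ∑ v, f v
        = f 0 + f 1 + f 2 + f 3 + f 4 + f 5 + f 6 + f 7 + f 8 + f 9 := fun f => by
      simp [Fin.sum_univ_succ, add_assoc]
    rw [hsum, e0, e 1 (by decide), e 2 (by decide), e 3 (by decide), e 4 (by decide),
      e 5 (by decide), e 6 (by decide), e 7 (by decide), e 8 (by decide), e 9 (by decide)] at h
    simpa only [zero_add] using h

/-- The arithmetic core. The nine sums `n v + m v` are at least one and add up to at most nine, so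
they all equal one; monotonicity then makes `n` and `m` constant on each branch, and one of them is
one on two branches, hence has total at least six. -/
theorem split_impossible (n m : Fin 10 → ℕ) (hall : ∀ v, 1 ≤ n v + m v)
    (hn : n 2 ≤ n 1 ∧ n 3 ≤ n 1 ∧ n 5 ≤ n 4 ∧ n 6 ≤ n 5 ∧ n 8 ≤ n 7 ∧ n 9 ≤ n 8)
    (hm : m 2 ≤ m 1 ∧ m 3 ≤ m 1 ∧ m 5 ≤ m 4 ∧ m 6 ≤ m 5 ∧ m 8 ≤ m 7 ∧ m 9 ≤ m 8)
    (hn5 : n 1 + n 2 + n 3 + n 4 + n 5 + n 6 + n 7 + n 8 + n 9 ≤ 5)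
    (hm5 : m 1 + m 2 + m 3 + m 4 + m 5 + m 6 + m 7 + m 8 + m 9 ≤ 5)
    (h9 : n 1 + n 2 + n 3 + n 4 + n 5 + n 6 + n 7 + n 8 + n 9
      + (m 1 + m 2 + m 3 + m 4 + m 5 + m 6 + m 7 + m 8 + m 9) ≤ 9) : False := by
  obtain ⟨hn2, hn3, hn5', hn6, hn8, hn9⟩ := hn
  obtain ⟨hm2, hm3, hm5', hm6, hm8, hm9⟩ := hm
  have a1 := hall 1
  have a2 := hall 2
  have a3 := hall 3
  have a4 := hall 4
  have a5 := hall 5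
  have a6 := hall 6
  have a7 := hall 7
  have a8 := hall 8
  have a9 := hall 9
  have b1 : n 1 + m 1 = 1 := le_antisymm (by linarith) a1
  have b4 : n 4 + m 4 = 1 := le_antisymm (by linarith) a4
  have b7 : n 7 + m 7 = 1 := le_antisymm (by linarith) a7
  have c2 : n 1 ≤ n 2 ∧ m 1 ≤ m 2 := ⟨by linarith, by linarith⟩
  have c3 : n 1 ≤ n 3 ∧ m 1 ≤ m 3 := ⟨by linarith, by linarith⟩
  have c5 : n 4 ≤ n 5 ∧ m 4 ≤ m 5 := ⟨by linarith, by linarith⟩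
  have c6 : n 4 ≤ n 6 ∧ m 4 ≤ m 6 := ⟨by linarith, by linarith⟩
  have c8 : n 7 ≤ n 8 ∧ m 7 ≤ m 8 := ⟨by linarith, by linarith⟩
  have c9 : n 7 ≤ n 9 ∧ m 7 ≤ m 9 := ⟨by linarith, by linarith⟩
  have d1 : 3 * (n 1 + n 4 + n 7) ≤ 5 := by linarith [c2.1, c3.1, c5.1, c6.1, c8.1, c9.1]
  have d2 : 3 * (m 1 + m 4 + m 7) ≤ 5 := by linarith [c2.2, c3.2, c5.2, c6.2, c8.2, c9.2]
  clear * - b1 b4 b7 d1 d2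
  omega

theorem two_lt_card {𝓘 : Finset tree.Subgraph} (hF : IsFeasible 0 10 𝓘)
    (hc : totalCost 𝓘 ≤ 18) : 2 < 𝓘.card := by
  classical
  obtain ⟨h1, h2⟩ := hF
  by_contra! hcard
  have hcases : 𝓘.card = 0 ∨ 𝓘.card = 1 ∨ 𝓘.card = 2 := by omega
  rcases hcases with h | h | h
  · rw [card_eq_zero] at h
    obtain ⟨I, hI, -⟩ := h2 0
    simp [h] at hI
  · obtain ⟨I, rfl⟩ := card_eq_one.1 h
    obtain ⟨hI, hIp⟩ := h1 I (by simp)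
    obtain ⟨n, hn, -, hs⟩ := indicator_bounds hI
    have hall (v : Fin 10) : 1 ≤ n v := hn v (by simpa using h2 v)
    have := hall 1
    have := hall 2
    have := hall 3
    have := hall 4
    have := hall 5
    have := hall 6
    have := hall 7
    have := hall 8
    have := hall 9
    omega
  · obtain ⟨I, J, hne, rfl⟩ := card_eq_two.1 h
    obtain ⟨hI, hIp⟩ := h1 I (by simp)
    obtain ⟨hJ, hJp⟩ := h1 J (by simp)
    rw [totalCost, sum_pair hne] at hc
    obtain ⟨n, hn, hnm, hs⟩ := indicator_bounds hI
    obtain ⟨m, hm, hmm, ht⟩ := indicator_bounds hJ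
    have hall (v : Fin 10) : 1 ≤ n v + m v := by
      have hv : v ∈ I.verts ∨ v ∈ J.verts := by simpa using h2 v
      rcases hv with hv | hv
      · exact (hn v hv).trans (Nat.le_add_right _ _)
      · exact (hm v hv).trans (Nat.le_add_left _ _)
    exact split_impossible n m hall hnm hmm (by omega) (by omega) (by omega)

end Stmt13

theorem stmt_13 :
    ∃ (V : Type) (inst : Fintype V) (T : SimpleGraph V) (r : V) (p : ℕ),
      T.IsTree ∧ 2 * @treeHeight V inst T r ≤ p ∧
      ∀ 𝓘 : Finset T.Subgraph, @MinDistOptimal V inst T r p 𝓘 →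
        ∀ 𝓙 : Finset T.Subgraph, @MinImmOptimal V inst T r p 𝓙 →
          𝓙.card < 𝓘.card := by
  refine ⟨Fin 10, inferInstance, Stmt13.tree, 0, 10, Stmt13.isTree_tree, ?_, ?_⟩
  · have := Stmt13.treeHeight_le
    omega
  · intro 𝓘 hI 𝓙 hJ
    obtain ⟨A, hA, hA2⟩ := Stmt13.exists_two
    obtain ⟨B, hB, hB18⟩ := Stmt13.exists_cheap
    calc 𝓙.card ≤ A.card := hJ.2 A hA
      _ ≤ 2 := hA2
      _ < 𝓘.card := Stmt13.two_lt_card hI.1 ((hI.2 B hB).trans hB18)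
end
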